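/- arXiv:2509.00241 — 3 statements merged into one kernel-verified Lean document; each statement's English description precedes it below -/
import Mathlib

section
/- Suppose that T(x) is a closed connected subset of S and that ‖τ̄_k(x)/τ_k(x) − τ̄_{k+1}(x)/τ_{k+1}(x)‖_∞ → 0 as k → ∞. Then V(x) = πT(x) = {ν_p̄ : p̄ ∈ T(x)}. -/
open MeasureTheory Filter Topology Set
open scoped ENNReal

noncomputable section

variable {X : Type*} [MetricSpace X] [CompactSpace X] [MeasurableSpace X] [BorelSpace X]

/-- The `n`-th empirical measure `e_n(x) = (1/n) ∑_{k<n} δ_{f^k x}`. -/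
def empMeasure (f : X → X) (n : ℕ) (x : X) : Measure X :=
  (n : ℝ≥0∞)⁻¹ • ∑ k ∈ Finset.range n, Measure.dirac (f^[k] x)

/-- Weak* convergence of a sequence of measures, tested against bounded continuous functions. -/
def WeakTendsto (μ : ℕ → Measure X) (ν : Measure X) : Prop :=
  ∀ g : BoundedContinuousFunction X ℝ,
    Tendsto (fun n => ∫ y, g y ∂(μ n)) atTop (𝓝 (∫ y, g y ∂ν))

/-- `V(x)`: the set of weak* limit points of `(e_n(x))_{n ≥ 1}`. -/
def Vset (f : X → X) (x : X) : Set (Measure X) :=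
  {ν | ∃ φ : ℕ → ℕ, StrictMono φ ∧ WeakTendsto (fun k => empMeasure f (φ k + 1) x) ν}

/-- The simplex `S = {p̄ ∈ [0,1]^d : p₁ + ⋯ + p_d = 1}`. -/
def simplexS (d : ℕ) : Set (Fin d → ℝ) :=
  {p | (∀ i, p i ∈ Set.Icc (0:ℝ) 1) ∧ ∑ i, p i = 1}

/-- The measure `ν_p̄ = ∑_j p_j δ_{ξ_j}`. -/
def nuMeasure {d : ℕ} (ξ : Fin d → X) (p : Fin d → ℝ) : Measure X :=
  ∑ j, ENNReal.ofReal (p j) • Measure.dirac (ξ j)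

/-- The first hit time `τ(x) = min {n ≥ 1 : f^n(x) ∈ Y}` (junk value `0` if the orbit
never hits `Y`). -/
def hitTime (f : X → X) (Y : Set X) (x : X) : ℕ :=
  sInf {n | 1 ≤ n ∧ f^[n] x ∈ Y}

/-- The first return map `F = f^τ`. -/
def retMap (f : X → X) (Y : Set X) (x : X) : X :=
  f^[hitTime f Y x] x

/-- The Birkhoff sums `τ_k(x) = ∑_{j<k} τ(F^j x)` of the return time under `F`. -/
def tauSum (f : X → X) (Y : Set X) (k : ℕ) (x : X) : ℕ :=
  ∑ j ∈ Finset.range k, hitTime f Y ((retMap f Y)^[j] x)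

/-- `τ^{(i)}(y) = #{1 ≤ n ≤ τ(y) : f^n(y) ∈ A}` (with `A = X_i`). -/
def tauJ (f : X → X) (Y A : Set X) (y : X) : ℕ :=
  ∑ n ∈ Finset.Icc 1 (hitTime f Y y), A.indicator (fun _ => 1) (f^[n] y)

/-- The Birkhoff sums `τ^{(i)}_k(x) = ∑_{j<k} τ^{(i)}(F^j x)`. -/
def tauJSum (f : X → X) (Y A : Set X) (k : ℕ) (x : X) : ℕ :=
  ∑ j ∈ Finset.range k, tauJ f Y A ((retMap f Y)^[j] x)

/-- The vector of ratios `τ̄_k(x)/τ_k(x) ∈ [0,1]^d`. -/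
def tauRatio (f : X → X) (Y : Set X) {d : ℕ} (Xp : Fin d → Set X) (k : ℕ) (x : X) :
    Fin d → ℝ :=
  fun i => (tauJSum f Y (Xp i) k x : ℝ) / (tauSum f Y k x : ℝ)

/-- `T(x) ⊆ [0,1]^d`: the set of limit points of the sequence `(τ̄_k(x)/τ_k(x))_{k ≥ 1}`. -/
def Tset (f : X → X) (Y : Set X) {d : ℕ} (Xp : Fin d → Set X) (x : X) :
    Set (Fin d → ℝ) :=
  {p | ∃ φ : ℕ → ℕ, StrictMono φ ∧
    Tendsto (fun k => tauRatio f Y Xp (φ k + 1) x) atTop (𝓝 p)}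


set_option linter.unusedSectionVars false

/-- Number of visits to `A` at times `1..N`. -/
def cnt (f : X → X) (A : Set X) (x : X) (N : ℕ) : ℕ :=
  ∑ n ∈ Finset.range N, A.indicator (fun _ => 1) (f^[n + 1] x)

theorem ind_le_one (A : Set X) (z : X) : A.indicator (fun _ => (1 : ℕ)) z ≤ 1 := by
  by_cases h : z ∈ A <;> simp [h]

theorem cnt_add_le (f : X → X) (A : Set X) (x : X) (N b : ℕ) :
    cnt f A x (N + b) ≤ cnt f A x N + b := by
  unfold cnt
  rw [Finset.sum_range_add]
  gcongr
  calc _ ≤ ∑ n ∈ Finset.range b, 1 := Finset.sum_le_sum fun i _ => ind_le_one _ _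
    _ = b := by simp

theorem cnt_le (f : X → X) (A : Set X) (x : X) (N : ℕ) : cnt f A x N ≤ N := by
  have := cnt_add_le f A x 0 N
  simpa [cnt] using this

theorem cnt_shift_le (f : X → X) (A : Set X) (x : X) (N b : ℕ) :
    ∑ n ∈ Finset.range N, A.indicator (fun _ => 1) (f^[b] (f^[n + 1] x))
      ≤ cnt f A x N + b := by
  refine le_trans ?_ (cnt_add_le f A x N b)
  unfold cnt
  rw [add_comm N b, Finset.sum_range_add]
  refine le_trans (le_of_eq ?_) (Nat.le_add_left _ _)
  refine Finset.sum_congr rfl fun n _ => ?_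
  rw [← Function.iterate_add_apply, add_assoc]

theorem emp_integral (f : X → X) (x : X) (N : ℕ) (g : BoundedContinuousFunction X ℝ) :
    ∫ y, g y ∂(empMeasure f N x) = (∑ n ∈ Finset.range N, g (f^[n] x)) / N := by
  unfold empMeasure
  rw [integral_smul_measure, integral_finset_sum_measure]
  · simp [integral_dirac, div_eq_inv_mul]
  · intro i _
    exact g.integrable _

theorem nu_integral {d : ℕ} (ξ : Fin d → X) (p : Fin d → ℝ) (hp : ∀ i, 0 ≤ p i)
    (g : BoundedContinuousFunction X ℝ) :
    ∫ y, g y ∂(nuMeasure ξ p) = ∑ j, p j * g (ξ j) := by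
  unfold nuMeasure
  rw [integral_finset_sum_measure]
  · refine Finset.sum_congr rfl fun j _ => ?_
    rw [integral_smul_measure, integral_dirac, ENNReal.toReal_ofReal (hp j), smul_eq_mul]
  · intro i _
    exact (g.integrable _).smul_measure ENNReal.ofReal_ne_top

theorem pointwise_bound (f : X → X) (Y : Set X)
    (d : ℕ) (ξ : Fin d → X)
    (Xp : Fin d → Set X)
    (hXd : Pairwise (Function.onFun Disjoint Xp))
    (hXU : (⋃ j, Xp j) = Yᶜ)
    (hξint : ∀ j, ξ j ∈ interior (Xp j))
    (hbd : ∀ K : Set X, IsCompact K → (∀ j, ξ j ∉ K) →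
      ∃ B : ℕ, ∀ z ∈ K \ Y, ∃ n, 1 ≤ n ∧ n ≤ B ∧ f^[n] z ∈ Y)
    (g : BoundedContinuousFunction X ℝ) (ε : ℝ) (hε : 0 < ε) :
    ∃ B : ℕ, ∀ z, |g z - ∑ j, ((Xp j).indicator (fun _ => 1) z : ℕ) * g (ξ j)|
      ≤ ε + 2 * ‖g‖ * ∑ b ∈ Finset.range (B + 1), (Y.indicator (fun _ => 1) (f^[b] z) : ℕ) := by
  set U : Fin d → Set X := fun j => interior (Xp j) ∩ {z | |g z - g (ξ j)| < ε} with hU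
  have hUo : ∀ j, IsOpen (U j) := fun j =>
    isOpen_interior.inter (isOpen_lt (by fun_prop) continuous_const)
  have hK : IsCompact (⋃ j, U j)ᶜ := (isOpen_iUnion hUo).isClosed_compl.isCompact
  obtain ⟨B, hB⟩ := hbd _ hK (by
    intro j hj
    exact hj (mem_iUnion.2 ⟨j, hξint j, by simpa using hε⟩))
  refine ⟨B, fun z => ?_⟩
  have hM : ∀ w, |g w| ≤ ‖g‖ := fun w => g.norm_coe_le_norm w
  have hM0 : 0 ≤ ‖g‖ := norm_nonneg g
  have hone : ∀ b ≤ B, f^[b] z ∈ Y → (1 : ℝ) ≤ 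
      ((∑ b ∈ Finset.range (B + 1), Y.indicator (fun _ => 1) (f^[b] z) : ℕ) : ℝ) := by
    intro b hb hbY
    have h1 : Y.indicator (fun _ => (1 : ℕ)) (f^[b] z) ≤
      ∑ b ∈ Finset.range (B + 1), Y.indicator (fun _ => (1 : ℕ)) (f^[b] z) :=
      Finset.single_le_sum (f := fun b => Y.indicator (fun _ => (1 : ℕ)) (f^[b] z))
        (fun _ _ => Nat.zero_le _) (Finset.mem_range.2 (by omega))
    rw [indicator_of_mem hbY] at h1
    exact_mod_cast h1
  have hnn : (0 : ℝ) ≤ 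
      ((∑ b ∈ Finset.range (B + 1), Y.indicator (fun _ => 1) (f^[b] z) : ℕ) : ℝ) :=
    Nat.cast_nonneg _
  set R := ((∑ b ∈ Finset.range (B + 1), Y.indicator (fun _ => 1) (f^[b] z) : ℕ) : ℝ)
  by_cases hz : z ∈ Y
  · have h0 : ∀ j, z ∉ Xp j := by
      intro j hj
      have : z ∈ Yᶜ := hXU ▸ mem_iUnion.2 ⟨j, hj⟩
      exact this hz
    have : ∑ j, (((Xp j).indicator (fun _ => 1) z : ℕ) : ℝ) * g (ξ j) = 0 := by
      refine Finset.sum_eq_zero fun j _ => ?_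
      rw [indicator_of_notMem (h0 j)]; simp
    rw [this, sub_zero]
    have h1 := hone 0 (Nat.zero_le _) hz
    nlinarith [hM z]
  · have : z ∈ ⋃ j, Xp j := by rw [hXU]; exact hz
    obtain ⟨i, hi⟩ := mem_iUnion.1 this
    have hs : ∑ j, (((Xp j).indicator (fun _ => 1) z : ℕ) : ℝ) * g (ξ j) = g (ξ i) := by
      rw [Finset.sum_eq_single i]
      · rw [indicator_of_mem hi]; simp
      · intro j _ hj
        rw [indicator_of_notMem]
        · simp
        · intro h
          exact (Set.disjoint_left.1 (hXd hj) h) hi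
      · simp
    rw [hs]
    by_cases hzK : z ∈ ⋃ j, U j
    · obtain ⟨j, hj⟩ := mem_iUnion.1 hzK
      have hij : i = j := by
        by_contra hne
        exact Set.disjoint_left.1 (hXd hne) hi (interior_subset hj.1)
      subst hij
      have h2 : |g z - g (ξ i)| < ε := hj.2
      nlinarith [mul_nonneg hM0 hnn]
    · obtain ⟨n, -, hn2, hn3⟩ := hB z ⟨hzK, hz⟩
      have h1 := hone n hn2 hn3
      have h2 : |g z - g (ξ i)| ≤ |g z| + |g (ξ i)| := abs_sub _ _
      nlinarith [hM z, hM (ξ i)]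

theorem core (f : X → X) (Y : Set X)
    (d : ℕ) (ξ : Fin d → X)
    (Xp : Fin d → Set X)
    (hXd : Pairwise (Function.onFun Disjoint Xp))
    (hXU : (⋃ j, Xp j) = Yᶜ)
    (hξint : ∀ j, ξ j ∈ interior (Xp j))
    (hbd : ∀ K : Set X, IsCompact K → (∀ j, ξ j ∉ K) →
      ∃ B : ℕ, ∀ z ∈ K \ Y, ∃ n, 1 ≤ n ∧ n ≤ B ∧ f^[n] z ∈ Y)
    (x : X) (hY0 : Tendsto (fun N : ℕ => (cnt f Y x N : ℝ) / N) atTop (𝓝 0))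
    (g : BoundedContinuousFunction X ℝ) :
    Tendsto (fun N : ℕ => (∑ n ∈ Finset.range N, g (f^[n] x)) / N
      - ∑ j, (cnt f (Xp j) x N : ℝ) / N * g (ξ j)) atTop (𝓝 0) := by
  rw [Metric.tendsto_atTop']
  intro ε hε
  obtain ⟨B, hB⟩ := pointwise_bound f Y d ξ Xp hXd hXU hξint hbd g (ε / 2) (by positivity)
  have hinv : Tendsto (fun N : ℕ => (1 : ℝ) / N) atTop (𝓝 0) := tendsto_one_div_atTop_nhds_zero_nat
  have hlim : Tendsto (fun N : ℕ => ε / 2 + 2 * ‖g‖ * ((B + 1) * ((cnt f Y x N : ℝ) / N + B * (1 / N)))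
      + 2 * ‖g‖ * (1 / N)) atTop (𝓝 (ε / 2 + 2 * ‖g‖ * ((B + 1) * (0 + B * 0)) + 2 * ‖g‖ * 0)) := by
    exact ((((hY0.add (hinv.const_mul _)).const_mul _).const_mul _).const_add _).add
      (hinv.const_mul _)
  have hlt0 : ε / 2 + 2 * ‖g‖ * ((B + 1) * (0 + B * 0)) + 2 * ‖g‖ * 0 < ε := by
    have : ε / 2 + 2 * ‖g‖ * ((B + 1) * (0 + B * 0)) + 2 * ‖g‖ * 0 = ε / 2 := by ring
    rw [this]; linarith
  have hev := hlim.eventually_lt_const hlt0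
  obtain ⟨N0, hN0⟩ := eventually_atTop.1 hev
  refine ⟨N0, fun N hN => ?_⟩
  have hlt := hN0 N hN.le
  have hNpos : (0 : ℝ) < N := by exact_mod_cast (by omega : 0 < N)
  rw [Real.dist_eq, sub_zero]
  refine lt_of_le_of_lt ?_ hlt
  have hM : ∀ w, |g w| ≤ ‖g‖ := fun w => g.norm_coe_le_norm w
  have hS : ∑ n ∈ Finset.range N, g (f^[n] x)
      = ∑ n ∈ Finset.range N, g (f^[n + 1] x) + g x - g (f^[N] x) := by
    have h1 := Finset.sum_range_succ (fun n => g (f^[n] x)) N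
    have h2 := Finset.sum_range_succ' (fun n => g (f^[n] x)) N
    simp only [Function.iterate_zero, id] at h2
    linarith
  have hc : ∑ j, (cnt f (Xp j) x N : ℝ) / N * g (ξ j) =
      (∑ n ∈ Finset.range N, ∑ j, (((Xp j).indicator (fun _ => 1) (f^[n + 1] x) : ℕ) : ℝ) * g (ξ j)) / N := by
    rw [Finset.sum_comm, Finset.sum_div]
    refine Finset.sum_congr rfl fun j _ => ?_
    rw [← Finset.sum_mul, cnt, Nat.cast_sum]
    ring
  have hdec : (∑ n ∈ Finset.range N, g (f^[n] x)) / N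
      - ∑ j, (cnt f (Xp j) x N : ℝ) / N * g (ξ j) =
      (∑ n ∈ Finset.range N, (g (f^[n + 1] x) -
        ∑ j, (((Xp j).indicator (fun _ => 1) (f^[n + 1] x) : ℕ) : ℝ) * g (ξ j))
        + (g x - g (f^[N] x))) / N := by
    rw [hc, hS, Finset.sum_sub_distrib]; ring
  rw [hdec, abs_div, abs_of_pos hNpos, div_le_iff₀ hNpos]
  have hmain : |∑ n ∈ Finset.range N, (g (f^[n + 1] x) -
        ∑ j, (((Xp j).indicator (fun _ => 1) (f^[n + 1] x) : ℕ) : ℝ) * g (ξ j))|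
      ≤ N * (ε / 2) + 2 * ‖g‖ * ((B + 1) * (cnt f Y x N + B)) := by
    refine (Finset.abs_sum_le_sum_abs _ _).trans ?_
    refine (Finset.sum_le_sum fun n _ => hB (f^[n + 1] x)).trans ?_
    push_cast
    rw [Finset.sum_add_distrib, ← Finset.mul_sum, Finset.sum_comm]
    simp only [Finset.sum_const, Finset.card_range, nsmul_eq_mul]
    gcongr
    calc _ ≤ ∑ b ∈ Finset.range (B + 1), ((cnt f Y x N : ℝ) + B) := by
          refine Finset.sum_le_sum fun b hb => ?_
          have h1 := cnt_shift_le f Y x N b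
          have h2 : b ≤ B := by have := Finset.mem_range.1 hb; omega
          have h3 := h1.trans (Nat.add_le_add_left h2 _)
          exact_mod_cast h3
      _ = _ := by simp; ring
  have h2 : |g x - g (f^[N] x)| ≤ |g x| + |g (f^[N] x)| := abs_sub _ _
  have h3 := hM x
  have h4 := hM (f^[N] x)
  refine (abs_add_le _ _).trans ?_
  have : (ε / 2 + 2 * ‖g‖ * ((B + 1) * ((cnt f Y x N : ℝ) / N + B * (1 / N)))
      + 2 * ‖g‖ * (1 / N)) * N = N * (ε / 2) + 2 * ‖g‖ * ((B + 1) * (cnt f Y x N + B)) + 2 * ‖g‖ := by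
    field_simp
  rw [this]
  linarith

theorem mem_Tset_of_tendsto (f : X → X) (Y : Set X) {d : ℕ} (Xp : Fin d → Set X) (x : X)
    (u : ℕ → ℕ) (hu : Tendsto u atTop atTop) (p : Fin d → ℝ)
    (hp : Tendsto (fun n => tauRatio f Y Xp (u n) x) atTop (𝓝 p)) : p ∈ Tset f Y Xp x := by
  have hv : Tendsto (fun n => u n - 1) atTop atTop := (tendsto_sub_atTop_nat 1).comp hu
  obtain ⟨φ, hφ, hφ2⟩ := strictMono_subseq_of_tendsto_atTop hv
  refine ⟨_, hφ2, ?_⟩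
  refine (hp.comp hφ.tendsto_atTop).congr' ?_
  filter_upwards [hφ.tendsto_atTop.eventually (hu.eventually_ge_atTop 1)] with n hn
  simp only [Function.comp]
  rw [Nat.sub_add_cancel hn]

section orbit

variable (f : X → X) (Y : Set X) (x : X)

theorem ret_eq (k : ℕ) : (retMap f Y)^[k] x = f^[tauSum f Y k x] x := by
  induction k with
  | zero => simp [tauSum]
  | succ k ih =>
    rw [Function.iterate_succ_apply', tauSum, Finset.sum_range_succ, ← tauSum, add_comm,
      Function.iterate_add_apply, ← ih]
    rfl

theorem hit_spec (hxrec : ∀ N : ℕ, ∃ n, N ≤ n ∧ 1 ≤ n ∧ f^[n] x ∈ Y) (a : ℕ) :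
    1 ≤ hitTime f Y (f^[a] x) ∧ f^[hitTime f Y (f^[a] x)] (f^[a] x) ∈ Y := by
  have : {n | 1 ≤ n ∧ f^[n] (f^[a] x) ∈ Y}.Nonempty := by
    obtain ⟨n, h1, h2, h3⟩ := hxrec (a + 1)
    refine ⟨n - a, by omega, ?_⟩
    rw [← Function.iterate_add_apply, Nat.sub_add_cancel (by omega)]
    exact h3
  exact Nat.sInf_mem this

theorem tau_succ (k : ℕ) :
    tauSum f Y (k + 1) x = tauSum f Y k x + hitTime f Y (f^[tauSum f Y k x] x) := by
  conv_lhs => rw [tauSum, Finset.sum_range_succ, ← tauSum, ret_eq]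

theorem tau_mem (hxrec : ∀ N : ℕ, ∃ n, N ≤ n ∧ 1 ≤ n ∧ f^[n] x ∈ Y) (k : ℕ) :
    f^[tauSum f Y (k + 1) x] x ∈ Y := by
  rw [tau_succ, add_comm, Function.iterate_add_apply]
  exact (hit_spec f Y x hxrec _).2

theorem tau_strictMono (hxrec : ∀ N : ℕ, ∃ n, N ≤ n ∧ 1 ≤ n ∧ f^[n] x ∈ Y) :
    StrictMono (fun k => tauSum f Y k x) := by
  refine strictMono_nat_of_lt_succ fun k => ?_
  have := (hit_spec f Y x hxrec (tauSum f Y k x)).1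
  simp only [tau_succ]
  omega

theorem not_mem_between (k t : ℕ) (h1 : tauSum f Y k x < t) (h2 : t < tauSum f Y (k + 1) x) :
    f^[t] x ∉ Y := by
  intro h
  rw [tau_succ] at h2
  have : hitTime f Y (f^[tauSum f Y k x] x) ≤ t - tauSum f Y k x := by
    refine Nat.sInf_le ⟨by omega, ?_⟩
    rw [← Function.iterate_add_apply, Nat.sub_add_cancel h1.le]
    exact h
  omega

theorem tauJSum_eq (A : Set X) (k : ℕ) : tauJSum f Y A k x = cnt f A x (tauSum f Y k x) := by
  induction k with
  | zero => simp [tauJSum, tauSum, cnt]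
  | succ k ih =>
    rw [tauJSum, Finset.sum_range_succ, ← tauJSum, ih, tau_succ, cnt, cnt, Finset.sum_range_add,
      ret_eq, tauJ]
    congr 1
    have h := Finset.sum_Ico_add' (fun n => A.indicator (fun _ => (1 : ℕ))
      (f^[n] (f^[tauSum f Y k x] x))) 0 (hitTime f Y (f^[tauSum f Y k x] x)) 1
    rw [Finset.range_eq_Ico]
    refine Eq.trans ?_ (h.symm.trans ?_)
    · refine Finset.sum_congr ?_ fun _ _ => rfl
      ext n
      simp only [Finset.mem_Icc, Finset.mem_Ico]
      omega
    · refine Finset.sum_congr rfl fun n _ => ?_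
      rw [← Function.iterate_add_apply]
      congr 2
      ring

/-- Visits inside an interval with all / no visits. -/
theorem cnt_const (A : Set X) (a n : ℕ) (h : ∀ t, a < t → t ≤ a + n → f^[t] x ∉ A) :
    cnt f A x (a + n) = cnt f A x a := by
  unfold cnt
  rw [Finset.sum_range_add, Finset.sum_eq_zero (s := Finset.range n), add_zero]
  intro i hi
  have := Finset.mem_range.1 hi
  rw [indicator_of_notMem (h _ (by omega) (by omega))]

theorem cnt_full (A : Set X) (a n : ℕ) (h : ∀ t, a < t → t ≤ a + n → f^[t] x ∈ A) :
    cnt f A x (a + n) = cnt f A x a + n := by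
  unfold cnt
  rw [Finset.sum_range_add, Finset.sum_congr (s₁ := Finset.range n) (g := fun _ => 1) rfl]
  · simp
  intro i hi
  have := Finset.mem_range.1 hi
  rw [indicator_of_mem (h _ (by omega) (by omega))]

theorem cnt_total {d : ℕ} (Xp : Fin d → Set X)
    (hXd : Pairwise (Function.onFun Disjoint Xp))
    (hXU : (⋃ j, Xp j) = Yᶜ) (N : ℕ) :
    cnt f Y x N + ∑ j, cnt f (Xp j) x N = N := by
  unfold cnt
  rw [Finset.sum_comm, ← Finset.sum_add_distrib]
  conv_rhs => rw [← Finset.card_range N, Finset.card_eq_sum_ones]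
  refine Finset.sum_congr rfl fun n _ => ?_
  generalize f^[n + 1] x = z
  by_cases hz : z ∈ Y
  · have h0 : ∀ j, z ∉ Xp j := by
      intro j hj
      have : z ∈ Yᶜ := hXU ▸ mem_iUnion.2 ⟨j, hj⟩
      exact this hz
    simp [hz, h0]
  · have : z ∈ ⋃ j, Xp j := by rw [hXU]; exact hz
    obtain ⟨i, hi⟩ := mem_iUnion.1 this
    rw [Finset.sum_eq_single i]
    · simp [hz, hi]
    · intro j _ hj
      rw [indicator_of_notMem]
      intro h
      exact (Set.disjoint_left.1 (hXd hj) h) hi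
    · simp

theorem ratio_bound {d : ℕ} (Xp : Fin d → Set X)
    (hXU : (⋃ j, Xp j) = Yᶜ)
    (hnc : ∀ z : X, ∀ n m : ℕ, ∀ i j, i ≠ j →
      f^[n] z ∈ Xp i → f^[n + m] z ∈ Xp j → ∃ k, 0 < k ∧ k < m ∧ f^[n + k] z ∈ Y)
    (hxrec : ∀ N : ℕ, ∃ n, N ≤ n ∧ 1 ≤ n ∧ f^[n] x ∈ Y)
    (k N : ℕ) (h0 : 0 < tauSum f Y k x) (h1 : tauSum f Y k x ≤ N) (h2 : N < tauSum f Y (k + 1) x)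
    (j : Fin d) :
    |(cnt f (Xp j) x N : ℝ) / N - tauRatio f Y Xp k x j| ≤
      |tauRatio f Y Xp k x j - tauRatio f Y Xp (k + 1) x j| + 1 / N := by
  simp only [tauRatio, tauJSum_eq]
  have hb := tau_mem f Y x hxrec k
  have hbt := not_mem_between f Y x k
  set a := tauSum f Y k x
  set b := tauSum f Y (k + 1) x
  have hYX : ∀ z ∈ Y, ∀ j, z ∉ Xp j := by
    intro z hz j hj
    have : z ∈ Yᶜ := hXU ▸ mem_iUnion.2 ⟨j, hj⟩
    exact this hz
  have haR : (0 : ℝ) < a := by exact_mod_cast h0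
  have haN : (a : ℝ) ≤ N := by exact_mod_cast h1
  have hNb : (N : ℝ) ≤ b := by exact_mod_cast h2.le
  have hNR : (0 : ℝ) < N := haR.trans_le haN
  have hbR : (0 : ℝ) < b := hNR.trans_le hNb
  have hca : (cnt f (Xp j) x a : ℝ) ≤ a := Nat.cast_le.2 (cnt_le f (Xp j) x a)
  have hc0 : (0 : ℝ) ≤ cnt f (Xp j) x a := Nat.cast_nonneg _
  have hi1 : 1 / (N : ℝ) ≤ 1 / a := one_div_le_one_div_of_le haR haN
  have hi2 : 1 / (b : ℝ) ≤ 1 / N := one_div_le_one_div_of_le hNR hNb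
  by_cases hv : ∃ t, a < t ∧ t < b ∧ f^[t] x ∈ Xp j
  · obtain ⟨t, ht1, ht2, ht3⟩ := hv
    have hall : ∀ s, a < s → s < b → f^[s] x ∈ Xp j := by
      intro s hs1 hs2
      have : f^[s] x ∈ ⋃ j, Xp j := by rw [hXU]; exact hbt s hs1 hs2
      obtain ⟨i, hi⟩ := mem_iUnion.1 this
      by_cases hij : i = j
      · exact hij ▸ hi
      exfalso
      rcases le_total s t with hst | hst
      · obtain ⟨l, hl1, hl2, hl3⟩ := hnc x s (t - s) i j hij hi
          (by rw [Nat.add_sub_cancel' hst]; exact ht3)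
        exact hbt (s + l) (by omega) (by omega) hl3
      · obtain ⟨l, hl1, hl2, hl3⟩ := hnc x t (s - t) j i (Ne.symm hij) ht3
          (by rw [Nat.add_sub_cancel' hst]; exact hi)
        exact hbt (t + l) (by omega) (by omega) hl3
    have e1 : (cnt f (Xp j) x N : ℝ) = cnt f (Xp j) x a + (N - a) := by
      have := cnt_full f x (Xp j) a (N - a) (fun s hs1 hs2 => hall s hs1 (by omega))
      rw [Nat.add_sub_cancel' h1] at this
      rw [this, Nat.cast_add, Nat.cast_sub h1]
    have e2 : (cnt f (Xp j) x b : ℝ) = cnt f (Xp j) x a + (b - 1 - a) := by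
      have e3 := cnt_full f x (Xp j) a (b - 1 - a) (fun s hs1 hs2 => hall s hs1 (by omega))
      have e4 := cnt_const f x (Xp j) (b - 1) 1 (fun s hs1 hs2 => by
        have : s = b := by omega
        exact this ▸ hYX _ hb j)
      rw [Nat.add_sub_cancel' (by omega)] at e3
      rw [Nat.sub_add_cancel (by omega)] at e4
      rw [e4, e3, Nat.cast_add, Nat.cast_sub (by omega), Nat.cast_sub (by omega)]
      simp
    rw [e1, e2]
    generalize (cnt f (Xp j) x a : ℝ) = c at *
    have r1 : (c + (N - a)) / N - c / a = (a - c) * (1 / a - 1 / N) := by field_simp; ring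
    have r2 : c / a - (c + (b - 1 - a)) / b = - ((a - c) * (1 / a - 1 / b) - 1 / b) := by
      field_simp; ring
    rw [r1, r2, abs_neg, abs_of_nonneg (mul_nonneg (by linarith) (by linarith))]
    have := le_abs_self ((a - c) * (1 / a - 1 / b) - 1 / (b : ℝ))
    have h5 : (a - c) * (1 / a - 1 / N) ≤ (a - c) * (1 / a - 1 / (b : ℝ)) :=
      mul_le_mul_of_nonneg_left (by linarith) (by linarith)
    linarith
  · push Not at hv
    have hall : ∀ s, a < s → s ≤ b → f^[s] x ∉ Xp j := by
      intro s hs1 hs2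
      rcases hs2.eq_or_lt with h | h
      · rw [h]; exact hYX _ hb j
      · exact hv s hs1 h
    have e1 : cnt f (Xp j) x N = cnt f (Xp j) x a := by
      have := cnt_const f x (Xp j) a (N - a) (fun s hs1 hs2 => hall s hs1 (by omega))
      rwa [Nat.add_sub_cancel' h1] at this
    have e2 : cnt f (Xp j) x b = cnt f (Xp j) x a := by
      have := cnt_const f x (Xp j) a (b - a) (fun s hs1 hs2 => hall s hs1 (by omega))
      rwa [Nat.add_sub_cancel' (by omega)] at this
    rw [e1, e2]
    generalize (cnt f (Xp j) x a : ℝ) = c at *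
    have r1 : c / N - c / a = - (c * (1 / a - 1 / N)) := by ring
    have r2 : c / a - c / b = c * (1 / a - 1 / b) := by ring
    rw [r1, r2, abs_neg, abs_of_nonneg (mul_nonneg hc0 (by linarith)),
      abs_of_nonneg (mul_nonneg hc0 (by linarith))]
    have h5 : c * (1 / a - 1 / N) ≤ c * (1 / a - 1 / (b : ℝ)) :=
      mul_le_mul_of_nonneg_left (by linarith) hc0
    have : 0 < 1 / (N : ℝ) := by positivity
    linarith

end orbit

/-- If `T(x)` is a closed connected subset of `S` and consecutive return-time
ratios become asymptotically close, then `V(x) = πT(x)`. -/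
theorem stmt4 (f : X → X) (hf : Measurable f)
    (Y : Set X) (hYc : IsCompact Y)
    (d : ℕ) (hd : 1 ≤ d) (ξ : Fin d → X) (hξ : Function.Injective ξ)
    (hξY : ∀ j, ξ j ∉ Y)
    (Xp : Fin d → Set X) (hXm : ∀ j, MeasurableSet (Xp j))
    (hXd : Pairwise (Function.onFun Disjoint Xp))
    (hXU : (⋃ j, Xp j) = Yᶜ)
    (hξint : ∀ j, ξ j ∈ interior (Xp j))
    (hξcl : ∀ i j, i ≠ j → ξ i ∉ closure (Xp j))
    (hnc : ∀ z : X, ∀ n m : ℕ, ∀ i j, i ≠ j →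
      f^[n] z ∈ Xp i → f^[n + m] z ∈ Xp j → ∃ k, 0 < k ∧ k < m ∧ f^[n + k] z ∈ Y)
    (hbd : ∀ K : Set X, IsCompact K → (∀ j, ξ j ∉ K) →
      ∃ B : ℕ, ∀ z ∈ K \ Y, ∃ n, 1 ≤ n ∧ n ≤ B ∧ f^[n] z ∈ Y)
    (x : X) (hxY : x ∈ Y) (hxrec : ∀ N : ℕ, ∃ n, N ≤ n ∧ 1 ≤ n ∧ f^[n] x ∈ Y)
    (hT1 : IsClosed (Tset f Y Xp x)) (hT2 : IsConnected (Tset f Y Xp x))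
    (hT3 : Tset f Y Xp x ⊆ simplexS d)
    (hdiff : Tendsto
      (fun k => ‖tauRatio f Y Xp (k + 1) x - tauRatio f Y Xp (k + 2) x‖) atTop (𝓝 0)) :
    Vset f x = {ν | ∃ p ∈ Tset f Y Xp x, ν = nuMeasure ξ p} := by
  set r : ℕ → Fin d → ℝ := fun k => tauRatio f Y Xp k x with hr
  set q : ℕ → Fin d → ℝ := fun N j => (cnt f (Xp j) x N : ℝ) / N with hq
  set τ : ℕ → ℕ := fun k => tauSum f Y k x with hτ
  have hmono : StrictMono τ := tau_strictMono f Y x hxrec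
  have hτ0 : τ 0 = 0 := by simp [hτ, tauSum]
  have hrq : ∀ k, r k = q (τ k) := by
    intro k; funext j
    simp only [hr, hq, hτ, tauRatio, tauJSum_eq]
  have hqI : ∀ N, q N ∈ Icc (0 : Fin d → ℝ) 1 := by
    intro N
    refine ⟨fun j => by simp only [hq]; positivity, fun j => ?_⟩
    refine div_le_one_of_le₀ ?_ (Nat.cast_nonneg _)
    exact Nat.cast_le.2 (cnt_le f (Xp j) x N)
  -- locate N between consecutive return times
  have hloc : ∀ N, ∃ k, τ k ≤ N ∧ N < τ (k + 1) := by
    intro N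
    have hex : ∃ k, N < τ k := ⟨N + 1, lt_of_lt_of_le (Nat.lt_succ_self N) (hmono.le_apply)⟩
    classical
    have h1 := Nat.find_spec hex
    have hpos : Nat.find hex ≠ 0 := by
      intro h0; rw [h0, hτ0] at h1; omega
    refine ⟨Nat.find hex - 1, ?_, ?_⟩
    · exact not_lt.1 (Nat.find_min hex (by omega))
    · rwa [Nat.sub_add_cancel (by omega)]
  choose κ hκ1 hκ2 using hloc
  have hκ : Tendsto κ atTop atTop := by
    refine tendsto_atTop.2 fun M => ?_
    filter_upwards [eventually_ge_atTop (τ (M + 1))] with N hN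
    have h3 : τ (M + 1) < τ (κ N + 1) := hN.trans_lt (hκ2 N)
    have := hmono.lt_iff_lt.1 h3
    omega
  have hinv : Tendsto (fun N : ℕ => (1 : ℝ) / N) atTop (𝓝 0) := tendsto_one_div_atTop_nhds_zero_nat
  have hdiff' : Tendsto (fun k => ‖r k - r (k + 1)‖) atTop (𝓝 0) :=
    (tendsto_add_atTop_iff_nat 1).1 hdiff
  have hclose : Tendsto (fun N => q N - r (κ N)) atTop (𝓝 0) := by
    have hlim : Tendsto (fun N : ℕ => ‖r (κ N) - r (κ N + 1)‖ + 1 / (N : ℝ)) atTop (𝓝 0) := by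
      simpa using (hdiff'.comp hκ).add hinv
    refine squeeze_zero_norm' ?_ hlim
    filter_upwards [hκ.eventually_ge_atTop 1] with N hN
    refine (pi_norm_le_iff_of_nonneg (by positivity)).2 fun j => ?_
    have hp : 0 < τ (κ N) := by
      rw [← hτ0]; exact hmono (by omega)
    have := ratio_bound f Y x Xp hXU hnc hxrec (κ N) N hp (hκ1 N) (hκ2 N) j
    refine this.trans ?_
    gcongr
    exact norm_le_pi_norm (r (κ N) - r (κ N + 1)) j
  have hmemT : ∀ (u : ℕ → ℕ) p, Tendsto u atTop atTop →
      Tendsto (fun n => q (u n)) atTop (𝓝 p) → p ∈ Tset f Y Xp x := by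
    intro u p hu hp
    refine mem_Tset_of_tendsto f Y Xp x (fun n => κ (u n)) (hκ.comp hu) p ?_
    have := hp.sub (hclose.comp hu)
    simpa [Function.comp_def] using this
  have hsub : ∀ u : ℕ → ℕ, Tendsto u atTop atTop → ∃ p ∈ Tset f Y Xp x, ∃ ψ : ℕ → ℕ,
      StrictMono ψ ∧ Tendsto (fun n => q (u (ψ n))) atTop (𝓝 p) := by
    intro u hu
    obtain ⟨p, -, ψ, hψ, hlim⟩ := (isCompact_Icc (a := (0 : Fin d → ℝ)) (b := 1)).tendsto_subseq
      (fun n => hqI (u n))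
    exact ⟨p, hmemT _ p (hu.comp hψ.tendsto_atTop) hlim, ψ, hψ, hlim⟩
  have hY0 : Tendsto (fun N : ℕ => (cnt f Y x N : ℝ) / N) atTop (𝓝 0) := by
    have hs : Tendsto (fun N => ∑ j, q N j) atTop (𝓝 1) := by
      refine tendsto_of_subseq_tendsto fun u hu => ?_
      obtain ⟨p, hpT, ψ, -, hlim⟩ := hsub u hu
      refine ⟨ψ, ?_⟩
      rw [← (hT3 hpT).2]
      exact tendsto_finset_sum _ fun j _ => (tendsto_pi_nhds.1 hlim) j
    have h1 : Tendsto (fun N => 1 - ∑ j, q N j) atTop (𝓝 0) := by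
      simpa using hs.const_sub 1
    refine h1.congr' ?_
    filter_upwards [eventually_ge_atTop 1] with N hN
    have hNR : (N : ℝ) ≠ 0 := by exact_mod_cast (by omega : N ≠ 0)
    have htot := cnt_total f Y x Xp hXd hXU N
    have htotR : (cnt f Y x N : ℝ) + ∑ j, (cnt f (Xp j) x N : ℝ) = N := by exact_mod_cast htot
    simp only [hq]
    rw [← Finset.sum_div, eq_div_iff hNR, sub_mul, div_mul_cancel₀ _ hNR]
    linarith
  have hweak : ∀ (u : ℕ → ℕ) p, p ∈ Tset f Y Xp x → Tendsto u atTop atTop →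
      Tendsto (fun n => q (u n)) atTop (𝓝 p) →
      WeakTendsto (fun n => empMeasure f (u n) x) (nuMeasure ξ p) := by
    intro u p hpT hu hp g
    have hc := (core f Y d ξ Xp hXd hXU hξint hbd x hY0 g).comp hu
    rw [nu_integral ξ p (fun i => ((hT3 hpT).1 i).1)]
    have h2 : Tendsto (fun n => ∑ j, q (u n) j * g (ξ j)) atTop (𝓝 (∑ j, p j * g (ξ j))) :=
      tendsto_finset_sum _ fun j _ => ((tendsto_pi_nhds.1 hp) j).mul_const _
    have h3 := hc.add h2
    rw [zero_add] at h3
    refine h3.congr fun n => ?_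
    rw [emp_integral]
    simp only [Function.comp, hq]
    ring
  have hfin : ∀ p, IsFiniteMeasure (nuMeasure ξ p) := by
    intro p
    refine ⟨?_⟩
    simp only [nuMeasure, Measure.finset_sum_apply, Measure.smul_apply, smul_eq_mul,
      measure_univ, mul_one]
    exact ENNReal.sum_lt_top.2 fun j _ => ENNReal.ofReal_lt_top
  ext ν
  constructor
  · rintro ⟨φ, hφ, hν⟩
    have hu : Tendsto (fun k => φ k + 1) atTop atTop :=
      (tendsto_add_atTop_nat 1).comp hφ.tendsto_atTop
    obtain ⟨p, hpT, ψ, hψ, hlim⟩ := hsub _ hu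
    refine ⟨p, hpT, ?_⟩
    have hw := hweak (fun n => φ (ψ n) + 1) p hpT (hu.comp hψ.tendsto_atTop) hlim
    have hint : ∀ g : BoundedContinuousFunction X ℝ,
        ∫ y, g y ∂ν = ∫ y, g y ∂(nuMeasure ξ p) := fun g =>
      tendsto_nhds_unique ((hν g).comp hψ.tendsto_atTop) (hw g)
    have hνfin : IsFiniteMeasure ν := by
      have h1 := hint (BoundedContinuousFunction.const X 1)
      rw [nu_integral ξ p (fun i => ((hT3 hpT).1 i).1)] at h1
      simp only [BoundedContinuousFunction.const_apply, mul_one, (hT3 hpT).2, integral_const,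
        smul_eq_mul] at h1
      refine ⟨lt_top_iff_ne_top.2 fun h => ?_⟩
      simp [Measure.real, h] at h1
    have := hfin p
    exact ext_of_forall_integral_eq_of_IsFiniteMeasure hint
  · rintro ⟨p, hpT, rfl⟩
    obtain ⟨φ, hφ, hlim⟩ := hpT
    have hu : StrictMono fun k => τ (φ k + 1) := fun a b hab => hmono (by have := hφ hab; omega)
    have hpos : ∀ k, 1 ≤ τ (φ k + 1) := fun k => by
      have := hmono (Nat.succ_pos (φ k)); rw [hτ0] at this; exact this
    refine ⟨fun k => τ (φ k + 1) - 1, fun a b hab => ?_, ?_⟩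
    · have h1 := hu hab
      have h2 := hpos a
      simp only at h1 ⊢
      omega
    · have hw := hweak (fun k => τ (φ k + 1)) p ⟨φ, hφ, hlim⟩ hu.tendsto_atTop (by
        refine hlim.congr fun k => ?_
        exact hrq _)
      simpa only [Nat.sub_add_cancel (hpos _)] using hw
end
end

section
/- The following are equivalent: (i) e_n(x)(K) → 0 as n → ∞ for every compact set K ⊆ X with K ∩ {ξ₁,…,ξ_d} = ∅; (ii) τ_k(x)/k → ∞ as k → ∞. -/
open MeasureTheory Filter Topology Set
open scoped ENNReal

noncomputable section

variable {X : Type*} [MetricSpace X] [CompactSpace X] [MeasurableSpace X] [BorelSpace X]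

open Classical in
lemma aux_emp (f : X → X) (n : ℕ) (x : X) (K : Set X) (hK : IsCompact K) :
    empMeasure f (n + 1) x K =
      ENNReal.ofReal ((Nat.count (fun m => f^[m] x ∈ K) (n + 1) : ℝ) / ((n + 1 : ℕ) : ℝ)) := by
  have hm := hK.measurableSet
  rw [ENNReal.ofReal_div_of_pos (by positivity), ENNReal.ofReal_natCast, ENNReal.ofReal_natCast,
    ENNReal.div_eq_inv_mul, Nat.count_eq_card_filter_range, Finset.card_filter]
  simp only [empMeasure, Measure.smul_apply, Measure.finsetSum_apply, smul_eq_mul]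
  congr 1
  rw [Nat.cast_sum]
  refine Finset.sum_congr rfl fun k _ => ?_
  rw [Measure.dirac_apply' _ hm]
  by_cases h : f^[k] x ∈ K <;> simp [h]

open Classical in
lemma aux_emp_tendsto (f : X → X) (x : X) (K : Set X) (hK : IsCompact K) :
    Tendsto (fun n => empMeasure f (n + 1) x K) atTop (𝓝 0) ↔
      Tendsto (fun n : ℕ => (Nat.count (fun m => f^[m] x ∈ K) n : ℝ) / (n : ℝ)) atTop (𝓝 0) := by
  simp only [aux_emp f _ x K hK]
  rw [← tendsto_add_atTop_iff_nat
    (f := fun n : ℕ => (Nat.count (fun m => f^[m] x ∈ K) n : ℝ) / (n : ℝ)) 1]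
  constructor
  · intro h
    have := (ENNReal.tendsto_toReal ENNReal.zero_ne_top).comp h
    simp only [ENNReal.toReal_zero] at this
    refine this.congr fun n => ?_
    simp only [Function.comp]
    rw [ENNReal.toReal_ofReal (by positivity)]
  · intro h
    have := ENNReal.tendsto_ofReal h
    simpa only [ENNReal.ofReal_zero] using this

lemma aux_nth (p : ℕ → Prop) [DecidablePred p] (hp : (setOf p).Infinite) :
    Tendsto (fun n : ℕ => (Nat.count p n : ℝ) / (n : ℝ)) atTop (𝓝 0) ↔
      Tendsto (fun k : ℕ => (Nat.nth p k : ℝ) / (k : ℝ)) atTop atTop := by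
  have hmono := Nat.nth_strictMono hp
  constructor
  · intro h
    have h1 := h.comp hmono.tendsto_atTop
    have h2 : Tendsto (fun k : ℕ => (k : ℝ) / (Nat.nth p k : ℝ)) atTop (𝓝[>] 0) := by
      refine tendsto_nhdsWithin_iff.2 ⟨?_, ?_⟩
      · refine h1.congr fun k => ?_
        simp only [Function.comp]
        rw [Nat.count_nth_of_infinite hp]
      · filter_upwards [eventually_gt_atTop 0] with k hk
        have : k ≤ Nat.nth p k := hmono.le_apply
        have h3 : (0 : ℝ) < k := by exact_mod_cast hk
        have h4 : (0 : ℝ) < Nat.nth p k := by exact_mod_cast (lt_of_lt_of_le hk this)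
        exact div_pos h3 h4
    refine (tendsto_inv_nhdsGT_zero.comp h2).congr fun k => ?_
    simp
  · intro h
    have hc : Tendsto (fun n => Nat.count p n) atTop atTop := by
      refine tendsto_atTop_atTop_of_monotone (Nat.count_monotone p) fun b => ?_
      exact ⟨Nat.nth p b, (Nat.count_nth_of_infinite hp b).ge⟩
    have hc1 : Tendsto (fun n => Nat.count p n - 1) atTop atTop :=
      (tendsto_sub_atTop_nat 1).comp hc
    have h1 := (tendsto_inv_atTop_zero.comp h).comp hc1
    have h2 := h1.add (tendsto_one_div_atTop_nhds_zero_nat (𝕜 := ℝ))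
    rw [add_zero] at h2
    refine squeeze_zero' (Eventually.of_forall fun n => by positivity) ?_ h2
    filter_upwards [hc.eventually_ge_atTop 2, eventually_gt_atTop 0] with n hn hn0
    obtain ⟨k, hk⟩ : ∃ k, Nat.count p n = k + 1 := ⟨Nat.count p n - 1, by omega⟩
    simp only [Function.comp, hk, Nat.add_sub_cancel, inv_div]
    have hlt : Nat.nth p k < n := Nat.nth_lt_of_lt_count (by omega)
    have hle : k ≤ Nat.nth p k := hmono.le_apply
    have h4 : (0 : ℝ) < Nat.nth p k := by exact_mod_cast (by omega : 0 < Nat.nth p k)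
    have h5 : (Nat.nth p k : ℝ) ≤ n := by exact_mod_cast hlt.le
    push_cast
    rw [add_div]
    gcongr

lemma aux_tau (f : X → X) (Y : Set X) (x : X) (hxY : x ∈ Y)
    (hp : (setOf fun m => f^[m] x ∈ Y).Infinite) (k : ℕ) :
    tauSum f Y k x = Nat.nth (fun m => f^[m] x ∈ Y) k ∧
      (retMap f Y)^[k] x = f^[Nat.nth (fun m => f^[m] x ∈ Y) k] x := by
  induction k with
  | zero => 
    have : Nat.nth (fun m => f^[m] x ∈ Y) 0 = 0 := Nat.nth_zero_of_zero (by simpa using hxY)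
    simp [tauSum, this]
  | succ k ih =>
    obtain ⟨h1, h2⟩ := ih
    set p : ℕ → Prop := fun m => f^[m] x ∈ Y with hpdef
    have hlt : Nat.nth p k < Nat.nth p (k + 1) := Nat.nth_strictMono hp (Nat.lt_succ_self k)
    have key : hitTime f Y (f^[Nat.nth p k] x) = Nat.nth p (k + 1) - Nat.nth p k := by
      unfold hitTime
      refine IsLeast.csInf_eq ⟨⟨by omega, ?_⟩, ?_⟩
      · rw [← Function.iterate_add_apply, Nat.sub_add_cancel hlt.le]
        exact Nat.nth_mem_of_infinite hp (k + 1)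
      · rintro n ⟨hn, hnY⟩
        rw [← Function.iterate_add_apply] at hnY
        by_contra hcon
        have := Nat.le_nth_of_lt_nth_succ (p := p) (k := k) (a := n + Nat.nth p k) (by omega) hnY
        omega
    constructor
    · rw [tauSum, Finset.sum_range_succ, ← tauSum, h1, h2, key]; omega
    · rw [Function.iterate_succ_apply', h2, retMap, key, ← Function.iterate_add_apply,
        Nat.sub_add_cancel hlt.le]

lemma aux_count (p q : ℕ → Prop) [DecidablePred p] [DecidablePred q] (B : ℕ)
    (h : ∀ m, q m → ∃ i ≤ B, p (m + i)) (n : ℕ) :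
    Nat.count q n ≤ (B + 1) * (Nat.count p n + B) := by
  classical
  rw [Nat.count_eq_card_filter_range]
  calc _ ≤ ((Finset.range (B + 1)).biUnion
        fun i => (Finset.range n).filter fun m => p (m + i)).card := by
        refine Finset.card_le_card fun m hm => ?_
        simp only [Finset.mem_filter, Finset.mem_range, Finset.mem_biUnion] at hm ⊢
        obtain ⟨i, hi, hpi⟩ := h m hm.2
        exact ⟨i, by omega, hm.1, hpi⟩
    _ ≤ (Finset.range (B + 1)).card * (Nat.count p n + B) := by
        refine Finset.card_biUnion_le_card_mul _ _ _ fun i hi => ?_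
        rw [Finset.mem_range] at hi
        rw [← Nat.count_eq_card_filter_range]
        have h1 : Nat.count p (i + n) = Nat.count p i + Nat.count (fun m => p (i + m)) n :=
          Nat.count_add _ _ _
        have h2 : Nat.count p (n + i) = Nat.count p n + Nat.count (fun m => p (n + m)) i :=
          Nat.count_add _ _ _
        have h3 : Nat.count (fun m => p (n + m)) i ≤ i := Nat.count_le _
        have h4 : Nat.count (fun m => p (m + i)) n = Nat.count (fun m => p (i + m)) n := by
          simp only [add_comm]
        rw [add_comm i n] at h1
        omega
    _ = _ := by rw [Finset.card_range]

/-- `e_n(x)(K) → 0` for every compact `K` avoiding `ξ₁,…,ξ_d` iff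
`τ_k(x)/k → ∞`. -/
theorem stmt8 (f : X → X) (hf : Measurable f) (d : ℕ) (hd : 1 ≤ d)
    (ξ : Fin d → X) (hξ : Function.Injective ξ)
    (Y : Set X) (hYc : IsCompact Y) (hYξ : ∀ j, ξ j ∉ Y)
    (hbd : ∀ K : Set X, IsCompact K → (∀ j, ξ j ∉ K) →
      ∃ B : ℕ, ∀ z ∈ K \ Y, ∃ n, 1 ≤ n ∧ n ≤ B ∧ f^[n] z ∈ Y)
    (x : X) (hxY : x ∈ Y) (hxrec : ∀ N : ℕ, ∃ n, N ≤ n ∧ 1 ≤ n ∧ f^[n] x ∈ Y) :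
    (∀ K : Set X, IsCompact K → (∀ j, ξ j ∉ K) →
        Tendsto (fun n => empMeasure f (n + 1) x K) atTop (𝓝 0)) ↔
      Tendsto (fun k => (tauSum f Y k x : ℝ) / (k : ℝ)) atTop atTop := by
  classical
  have hp : (setOf fun m => f^[m] x ∈ Y).Infinite := by
    refine Set.infinite_of_not_bddAbove ?_
    rintro ⟨b, hb⟩
    obtain ⟨n, hn, _, hnY⟩ := hxrec (b + 1)
    have := hb (show n ∈ setOf fun m => f^[m] x ∈ Y from hnY)
    omega
  have htau : (fun k => (tauSum f Y k x : ℝ) / (k : ℝ)) =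
      fun k => (Nat.nth (fun m => f^[m] x ∈ Y) k : ℝ) / (k : ℝ) := by
    funext k
    rw [(aux_tau f Y x hxY hp k).1]
  rw [htau, ← aux_nth _ hp]
  constructor
  · intro h
    exact (aux_emp_tendsto f x Y hYc).1 (h Y hYc hYξ)
  · intro h K hK hKξ
    refine (aux_emp_tendsto f x K hK).2 ?_
    obtain ⟨B, hB⟩ := hbd K hK hKξ
    have hc := aux_count (fun m => f^[m] x ∈ Y) (fun m => f^[m] x ∈ K) B (by
      intro m hm
      by_cases hmY : f^[m] x ∈ Y
      · exact ⟨0, Nat.zero_le _, hmY⟩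
      · obtain ⟨n, _, hnB, hnY⟩ := hB _ ⟨hm, hmY⟩
        refine ⟨n, hnB, ?_⟩
        rwa [← Function.iterate_add_apply, add_comm] at hnY)
    have h2 := (h.add (tendsto_const_div_atTop_nhds_zero_nat (B : ℝ))).const_mul ((B : ℝ) + 1)
    rw [add_zero, mul_zero] at h2
    refine squeeze_zero (fun n => by positivity) (fun n => ?_) h2
    rw [← add_div, ← mul_div_assoc]
    have : (Nat.count (fun m => f^[m] x ∈ K) n : ℝ) ≤
        ((B : ℝ) + 1) * ((Nat.count (fun m => f^[m] x ∈ Y) n : ℝ) + B) := by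
      exact_mod_cast hc n
    gcongr
end
end

section
/- For every x ∈ X, if V(x) ⊆ πS then V(x) = {ν_p̄ : p̄ ∈ T̃(x)}. -/
open MeasureTheory Filter Topology Set
open scoped ENNReal

noncomputable section

variable {X : Type*} [MetricSpace X] [CompactSpace X] [MeasurableSpace X] [BorelSpace X]

/-- `T̃(x) ⊆ [0,1]^d`: the set of limit points of the sequence
`((e_n(x)(X₁), …, e_n(x)(X_d)))_{n ≥ 1}`. -/
def Ttilde (f : X → X) {d : ℕ} (Xp : Fin d → Set X) (x : X) : Set (Fin d → ℝ) :=
  {p | ∃ φ : ℕ → ℕ, StrictMono φ ∧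
    Tendsto (fun n => fun j => ((empMeasure f (φ n + 1) x) (Xp j)).toReal) atTop (𝓝 p)}

instance empMeasure_isProb (f : X → X) (n : ℕ) (x : X) :
    IsProbabilityMeasure (empMeasure f (n + 1) x) := by
  constructor
  simp only [empMeasure, Measure.smul_apply, Measure.finsetSum_apply, measure_univ,
    Finset.sum_const, Finset.card_range, smul_eq_mul, nsmul_eq_mul, mul_one]
  exact ENNReal.inv_mul_cancel (by simp) (by simp)

/-- The empirical measure as a bundled probability measure. -/
def empPM (f : X → X) (x : X) (n : ℕ) : ProbabilityMeasure X :=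
  ⟨empMeasure f (n + 1) x, empMeasure_isProb f n x⟩

theorem nuMeasure_isProb {d : ℕ} (ξ : Fin d → X) (p : Fin d → ℝ) (hp : p ∈ simplexS d) :
    IsProbabilityMeasure (nuMeasure ξ p) := by
  constructor
  simp only [nuMeasure, Measure.smul_apply, Measure.finsetSum_apply, measure_univ,
    smul_eq_mul, mul_one]
  rw [← ENNReal.ofReal_sum_of_nonneg (fun i _ => (hp.1 i).1), hp.2, ENNReal.ofReal_one]

theorem tendsto_of_weak (f : X → X) (d : ℕ)
    (ξ : Fin d → X) (Xp : Fin d → Set X) (hXm : ∀ j, MeasurableSet (Xp j))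
    (hξint : ∀ j, ξ j ∈ interior (Xp j))
    (hξcl : ∀ i j, i ≠ j → ξ i ∉ closure (Xp j))
    (x : X) (p : Fin d → ℝ) (hp : p ∈ simplexS d) (φ : ℕ → ℕ)
    (h : WeakTendsto (fun k => empMeasure f (φ k + 1) x) (nuMeasure ξ p)) :
    Tendsto (fun n => fun j => ((empMeasure f (φ n + 1) x) (Xp j)).toReal) atTop (𝓝 p) := by
  have hP := nuMeasure_isProb ξ p hp
  have hT : Tendsto (fun k => empPM f x (φ k)) atTop
      (𝓝 (⟨nuMeasure ξ p, hP⟩ : ProbabilityMeasure X)) := by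
    exact ProbabilityMeasure.tendsto_iff_forall_integral_tendsto.2 h
  rw [tendsto_pi_nhds]
  intro j
  have hfr : nuMeasure ξ p (frontier (Xp j)) = 0 := by
    simp only [nuMeasure, Measure.smul_apply, Measure.finsetSum_apply, smul_eq_mul]
    refine Finset.sum_eq_zero fun i _ => ?_
    rw [Measure.dirac_apply' _ isClosed_frontier.measurableSet, indicator_of_notMem, mul_zero]
    intro hi
    by_cases hij : i = j
    · subst hij
      exact hi.2 (hξint i)
    · exact hξcl i j hij hi.1
  have hval : nuMeasure ξ p (Xp j) = ENNReal.ofReal (p j) := by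
    simp only [nuMeasure, Measure.smul_apply, Measure.finsetSum_apply, smul_eq_mul]
    rw [Finset.sum_eq_single j]
    · rw [Measure.dirac_apply' _ (hXm j), indicator_of_mem (interior_subset (hξint j))]
      simp
    · intro i _ hij
      rw [Measure.dirac_apply' _ (hXm j),
        indicator_of_notMem (fun hi => hξcl i j hij (subset_closure hi)), mul_zero]
    · simp
  have h1 := ProbabilityMeasure.tendsto_measure_of_null_frontier_of_tendsto' hT (E := Xp j) hfr
  have h2 := (ENNReal.tendsto_toReal (measure_ne_top (nuMeasure ξ p) (Xp j))).comp h1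
  rw [hval, ENNReal.toReal_ofReal (hp.1 j).1] at h2
  exact h2

/-- If `V(x) ⊆ πS` then `V(x) = {ν_p̄ : p̄ ∈ T̃(x)}`. -/
theorem stmt9 (f : X → X) (hf : Measurable f) (d : ℕ) (hd : 1 ≤ d)
    (ξ : Fin d → X) (hξ : Function.Injective ξ)
    (Xp : Fin d → Set X) (hXm : ∀ j, MeasurableSet (Xp j))
    (hXd : Pairwise (Function.onFun Disjoint Xp))
    (hξint : ∀ j, ξ j ∈ interior (Xp j))
    (hξcl : ∀ i j, i ≠ j → ξ i ∉ closure (Xp j))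
    (x : X)
    (hVS : ∀ ν ∈ Vset f x, ∃ p ∈ simplexS d, ν = nuMeasure ξ p) :
    Vset f x = {ν | ∃ p ∈ Ttilde f Xp x, ν = nuMeasure ξ p} := by
  ext ν
  constructor
  · rintro ⟨φ, hφ, hw⟩
    obtain ⟨p, hp, rfl⟩ := hVS ν ⟨φ, hφ, hw⟩
    exact ⟨p, ⟨φ, hφ, tendsto_of_weak f d ξ Xp hXm hξint hξcl x p hp φ hw⟩, rfl⟩
  · rintro ⟨p, ⟨φ, hφ, hT⟩, rfl⟩
    obtain ⟨μ, ψ, hψ, hμ⟩ := CompactSpace.tendsto_subseq (fun k => empPM f x (φ k))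
    have hw : WeakTendsto (fun k => empMeasure f ((φ ∘ ψ) k + 1) x) (μ : Measure X) := by
      rw [ProbabilityMeasure.tendsto_iff_forall_integral_tendsto] at hμ
      exact hμ
    have hV : (μ : Measure X) ∈ Vset f x := ⟨φ ∘ ψ, hφ.comp hψ, hw⟩
    obtain ⟨q, hq, hμq⟩ := hVS _ hV
    have h2 := tendsto_of_weak f d ξ Xp hXm hξint hξcl x q hq (φ ∘ ψ) (hμq ▸ hw)
    have hpq : p = q := tendsto_nhds_unique (hT.comp hψ.tendsto_atTop) h2
    rw [hpq, ← hμq]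
    exact hV
end
end
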